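/- Fix an integer n ≥ 1 and a real number λ ≥ 1. Consider the set PF(n, λ) of pairs (m, M) where 1 ≤ m ≤ n and M is an m×m matrix with natural number entries which is irreducible and for which there exist a real number μ ≤ λ and a vector x ∈ ℝ^m with all coordinates nonnegative, x ≠ 0, and M x = μ x. Then PF(n, λ) is a finite set of cardinality at most n·(n·λ^{n+1} + 1)^{n²}. In particular, for fixed n this bound is polynomial in λ. -/

import Mathlib

/-- An `m × m` matrix with natural number entries is *irreducible* if for all indices
`i, j` there exists `k ≥ 1` such that the `(i,j)` entry of `M ^ k` is nonzero. -/
def Matrix.NatIrreducible {m : ℕ} (M : Matrix (Fin m) (Fin m) ℕ) : Prop :=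
  ∀ i j : Fin m, ∃ k : ℕ, 1 ≤ k ∧ (M ^ k) i j ≠ 0

/-- `PF n lam` is the set of (sizes together with) square irreducible matrices with
natural number entries, of size `m` with `1 ≤ m ≤ n`, admitting a nonnegative nonzero
real eigenvector with eigenvalue `μ ≤ lam`. -/
def PF (n : ℕ) (lam : ℝ) : Set (Σ m : ℕ, Matrix (Fin m) (Fin m) ℕ) :=
  { p | 1 ≤ p.1 ∧ p.1 ≤ n ∧ p.2.NatIrreducible ∧
      ∃ (μ : ℝ) (x : Fin p.1 → ℝ), μ ≤ lam ∧ (∀ i, 0 ≤ x i) ∧ x ≠ 0 ∧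
        (p.2.map (fun a : ℕ => (a : ℝ))).mulVec x = μ • x }

lemma PF_closed {m : ℕ} {M : Matrix (Fin m) (Fin m) ℕ} (hM : M.NatIrreducible)
    (S : Set (Fin m)) (j : Fin m) (hj : j ∈ S)
    (hS : ∀ l p, l ∈ S → M l p ≠ 0 → p ∈ S) (i : Fin m) : i ∈ S := by
  have key : ∀ k p, (M ^ k) j p ≠ 0 → p ∈ S := by
    intro k
    induction k with
    | zero =>
      intro p hp
      by_cases h : j = p
      · exact h ▸ hj
      · simp [Matrix.one_apply, h] at hp
    | succ k ih =>
      intro p hp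
      rw [pow_succ, Matrix.mul_apply] at hp
      obtain ⟨l, _, hl⟩ := Finset.exists_ne_zero_of_sum_ne_zero hp
      exact hS l p (ih l (left_ne_zero_of_mul hl)) (right_ne_zero_of_mul hl)
  obtain ⟨k, _, hk⟩ := hM j i
  exact key k i hk

lemma PF_entry_le {m : ℕ} {M : Matrix (Fin m) (Fin m) ℕ} (hM : M.NatIrreducible)
    {lam μ : ℝ} (hlam : 1 ≤ lam) (hμ : μ ≤ lam) {x : Fin m → ℝ} (hx : ∀ i, 0 ≤ x i)
    (hx0 : x ≠ 0) (he : (M.map (fun a : ℕ => (a : ℝ))).mulVec x = μ • x) (i j : Fin m) :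
    (M i j : ℝ) ≤ lam ^ (m + 1) := by
  have hedge : ∀ l p, (M l p : ℝ) * x p ≤ lam * x l := by
    intro l p
    have h := congrFun he l
    simp only [Matrix.mulVec, dotProduct, Matrix.map_apply, Pi.smul_apply, smul_eq_mul] at h
    have h1 : (M l p : ℝ) * x p ≤ ∑ q, (M l q : ℝ) * x q :=
      Finset.single_le_sum (f := fun q => (M l q : ℝ) * x q)
        (fun q _ => mul_nonneg (Nat.cast_nonneg _) (hx q)) (Finset.mem_univ p)
    rw [h] at h1
    exact h1.trans (mul_le_mul_of_nonneg_right hμ (hx l))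
  have hedge1 : ∀ l p, M l p ≠ 0 → x p ≤ lam * x l := by
    intro l p h
    have h1 : (1 : ℝ) ≤ M l p := by exact_mod_cast Nat.one_le_iff_ne_zero.mpr h
    exact (le_mul_of_one_le_left (hx p) h1).trans (hedge l p)
  have hpos : 0 < x j := by
    refine lt_of_le_of_ne (hx j) fun h0 => hx0 ?_
    funext i
    refine PF_closed hM {l | x l = 0} j h0.symm ?_ i
    intro l p hl h
    have h2 := hedge1 l p h
    rw [Set.mem_setOf_eq] at hl
    rw [hl, mul_zero] at h2
    exact le_antisymm h2 (hx p)
  let S : ℕ → Finset (Fin m) := fun t => Finset.univ.filter fun l => x l ≤ lam ^ t * x j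
  have hmono : ∀ t, S t ⊆ S (t + 1) := by
    intro t l hl
    simp only [S, Finset.mem_filter, Finset.mem_univ, true_and] at hl ⊢
    exact hl.trans (mul_le_mul_of_nonneg_right (pow_le_pow_right₀ hlam (Nat.le_succ t)) hpos.le)
  have hstep : ∀ t l p, l ∈ S t → M l p ≠ 0 → p ∈ S (t + 1) := by
    intro t l p hl h
    simp only [S, Finset.mem_filter, Finset.mem_univ, true_and] at hl ⊢
    calc x p ≤ lam * x l := hedge1 l p h
      _ ≤ lam * (lam ^ t * x j) := mul_le_mul_of_nonneg_left hl (by linarith)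
      _ = _ := by ring
  have hj : ∀ t, j ∈ S t := by
    intro t
    simp only [S, Finset.mem_filter, Finset.mem_univ, true_and]
    exact le_mul_of_one_le_left hpos.le (one_le_pow₀ hlam)
  have hcard : ∀ t, S t = Finset.univ ∨ t ≤ (S t).card := by
    intro t
    induction t with
    | zero => right; simp
    | succ t ih =>
      by_cases hu : S (t + 1) = S t
      · left
        rw [Finset.eq_univ_iff_forall]
        intro i
        exact PF_closed hM (S (t + 1) : Set (Fin m)) j (hj _)
          (fun l p hl h => hstep t l p (hu ▸ hl) h) i
      · rcases ih with ih | ih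
        · left
          exact Finset.univ_subset_iff.mp (ih ▸ hmono t)
        · right
          have := Finset.card_lt_card ((hmono t).ssubset_of_ne (Ne.symm hu))
          omega
  have hall : S m = Finset.univ := by
    rcases hcard m with h | h
    · exact h
    · exact (Finset.card_eq_iff_eq_univ _).mp (le_antisymm (Finset.card_le_univ _) (by simpa using h))
  have hi : i ∈ S m := hall ▸ Finset.mem_univ i
  simp only [S, Finset.mem_filter, Finset.mem_univ, true_and] at hi
  refine le_of_mul_le_mul_right ?_ hpos
  calc (M i j : ℝ) * x j ≤ lam * x i := hedge i j
    _ ≤ lam * (lam ^ m * x j) := mul_le_mul_of_nonneg_left hi (by linarith)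
    _ = _ := by ring

theorem PF_finite_card_le (n : ℕ) (hn : 1 ≤ n) (lam : ℝ) (hlam : 1 ≤ lam) :
    (PF n lam).Finite ∧
      ((PF n lam).ncard : ℝ) ≤ (n : ℝ) * ((n : ℝ) * lam ^ (n + 1) + 1) ^ (n ^ 2) := by
  have hn' : (1 : ℝ) ≤ n := by exact_mod_cast hn
  have hB : 0 ≤ (n : ℝ) * lam ^ (n + 1) := by positivity
  obtain ⟨N, hN⟩ : ∃ N, N = ⌊(n : ℝ) * lam ^ (n + 1)⌋₊ := ⟨_, rfl⟩
  let T : Finset (Σ m : ℕ, Matrix (Fin m) (Fin m) ℕ) :=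
    (Finset.Icc 1 n).sigma fun m =>
      (Fintype.piFinset fun _ : Fin m => Fintype.piFinset fun _ : Fin m => Finset.range (N + 1) :
        Finset (Fin m → Fin m → ℕ))
  have hsub : PF n lam ⊆ (T : Set _) := by
    rintro ⟨m, M⟩ ⟨h1, h2, hM, μ, x, hμ, hx, hx0, he⟩
    simp only at h1 h2
    refine Finset.mem_coe.mpr (Finset.mem_sigma.mpr ⟨Finset.mem_Icc.mpr ⟨h1, h2⟩, ?_⟩)
    refine Fintype.mem_piFinset.mpr fun i => Fintype.mem_piFinset.mpr fun j => ?_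
    refine Finset.mem_range.mpr (Nat.lt_succ_of_le ?_)
    rw [hN]
    refine Nat.le_floor ?_
    calc (M i j : ℝ) ≤ lam ^ (m + 1) := PF_entry_le hM hlam hμ hx hx0 he i j
      _ ≤ lam ^ (n + 1) := pow_le_pow_right₀ hlam (by omega)
      _ ≤ _ := le_mul_of_one_le_left (by positivity) hn'
  have hT : T.card ≤ n * (N + 1) ^ (n ^ 2) := by
    have : T.card = ∑ m ∈ Finset.Icc 1 n, ((N + 1) ^ m) ^ m := by
      refine (Finset.card_sigma _ _).trans (Finset.sum_congr rfl fun m _ => ?_)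
      have h : (Fintype.piFinset fun _ : Fin m => Fintype.piFinset fun _ : Fin m =>
          Finset.range (N + 1)).card = ((N + 1) ^ m) ^ m := by
        simp [Fintype.card_piFinset]
      exact h
    rw [this]
    refine (Finset.sum_le_card_nsmul _ _ ((N + 1) ^ (n ^ 2)) fun m hm => ?_).trans (by simp)
    rw [← pow_mul, sq]
    have := (Finset.mem_Icc.mp hm).2
    exact Nat.pow_le_pow_right (Nat.succ_pos _) (Nat.mul_le_mul this this)
  refine ⟨T.finite_toSet.subset hsub, ?_⟩
  have h1 : (PF n lam).ncard ≤ n * (N + 1) ^ (n ^ 2) :=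
    ((Set.ncard_le_ncard hsub T.finite_toSet).trans (Set.ncard_coe_finset T).le).trans hT
  have h2 : ((PF n lam).ncard : ℝ) ≤ n * ((N : ℝ) + 1) ^ (n ^ 2) := by exact_mod_cast h1
  refine h2.trans ?_
  have h3 : (N : ℝ) ≤ (n : ℝ) * lam ^ (n + 1) := hN ▸ Nat.floor_le hB
  gcongr
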